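/- For integers l ≥ 3 and d ≥ 1, let A be the (2l+1) × (2l+1) matrix with rows and columns indexed by v₁,…,v_l, u₁,…,u_l, u₀, whose entries are A_{v_i v_j} = 2d for i ≠ j, A_{v_i u_j} = A_{u_j v_i} = d+1 for i ≠ j, A_{v_i u_i} = A_{u_i v_i} = 0, A_{v_i u₀} = A_{u₀ v_i} = d, and all remaining entries zero. For each pair i ≠ j with i, j ∈ {1, …, l}, the determinant of the (2l−1) × (2l−1) principal submatrix of A obtained by deleting the rows and columns indexed by u_i and u_j equals (−1)^{l−2} · 4d³ · (d+1)^{2(l−2)}. -/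

import Mathlib

open SimpleGraph Finset Matrix Polynomial

/-- The `(2l+1) × (2l+1)` matrix `A` indexed by `v₁, …, v_l` (the `Sum.inl` indices),
`u₁, …, u_l` (the `Sum.inr ∘ Sum.inl` indices) and `u₀` (the `Sum.inr (Sum.inr ())` index). -/
def matA (l d : ℕ) : Matrix (Fin l ⊕ Fin l ⊕ Unit) (Fin l ⊕ Fin l ⊕ Unit) ℝ :=
  Matrix.of fun x y =>
    match x, y with
    | Sum.inl i, Sum.inl j => if i = j then 0 else 2*d
    | Sum.inl i, Sum.inr (Sum.inl j) => if i = j then 0 else d+1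
    | Sum.inr (Sum.inl i), Sum.inl j => if i = j then 0 else d+1
    | Sum.inl _, Sum.inr (Sum.inr _) => d
    | Sum.inr (Sum.inr _), Sum.inl _ => d
    | _, _ => 0

/-!
Write `a, b, c` for the weights `2d, d+1, d`. Let `E` be the incidence matrix of the `m` surviving
`u`'s inside the `n` vertices `v`, let `J` denote an all-ones block and put `B = [E | 1]`. The
block between the `v`'s and the `u`'s together with `u₀` is `[b (J - E) | c] = B T` for a block
triangular `T` of determinant `(-b)^m c`, and the `J` inside the corner `a (J - I)` can be cleared
with the all-ones column of `B`. What remains is `[[-a I, B], [Bᵀ, 0]]`, whose determinant is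
`(-a)^(n-m-1)` times that of `-Bᵀ B`. Finally `Bᵀ B = [[I, 1], [1ᵀ, n]]` has determinant `n - m`,
the number of deleted `u`'s.
-/

section BlockDeterminants

variable {m n R : Type*} [Fintype m] [DecidableEq m] [Fintype n] [DecidableEq n] [CommRing R]

theorem det_fromBlocks_mul_mul (A : Matrix m m R) (B : Matrix m n R) (C : Matrix n m R)
    (D S T : Matrix n n R) :
    (fromBlocks A (B * T) (S * C) (S * D * T)).det = S.det * T.det * (fromBlocks A B C D).det := by
  have factorization : fromBlocks A (B * T) (S * C) (S * D * T) =
      fromBlocks 1 0 0 S * fromBlocks A B C D * fromBlocks 1 0 0 T := by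
    simp [fromBlocks_multiply]
  rw [factorization, det_mul, det_mul, det_fromBlocks_zero₂₁, det_fromBlocks_zero₂₁, det_one]
  ring

theorem det_fromBlocks_add_mul (A : Matrix m m R) (B : Matrix m n R) (C : Matrix n m R)
    (D : Matrix n n R) (X : Matrix n m R) :
    (fromBlocks (A + B * X) B (C + D * X) D).det = (fromBlocks A B C D).det := by
  have factorization : fromBlocks (A + B * X) B (C + D * X) D =
      fromBlocks A B C D * fromBlocks 1 0 X 1 := by
    simp [fromBlocks_multiply]
  rw [factorization, det_mul, det_fromBlocks_zero₁₂, det_one, det_one, mul_one, mul_one]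

theorem det_fromBlocks_smul_one₁₁_mul_pow (a : R) (B : Matrix m n R) (C : Matrix n m R)
    (D : Matrix n n R) :
    (fromBlocks (a • 1) B C D).det * a ^ Fintype.card n =
      a ^ Fintype.card m * (a • D - C * B).det := by
  have elimination : fromBlocks (a • 1) B C D * fromBlocks 1 (-B) 0 (a • 1) =
      fromBlocks (a • 1) 0 C (a • D - C * B) := by
    simp [fromBlocks_multiply, neg_add_eq_sub]
  simpa [det_smul] using congrArg det elimination

theorem det_fromBlocks_smul_one_zero₂₂ (a : R) (B : Matrix m n R) (C : Matrix n m R) {k : ℕ}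
    (hcard : Fintype.card m = Fintype.card n + k) :
    (fromBlocks (a • 1) B C 0).det = a ^ k * (-(C * B)).det := by
  let B' := B.map Polynomial.C
  let C' := C.map Polynomial.C
  -- The indeterminate is cancellable even where `a` is not, so divide in `R[X]` and specialize.
  have generic : (fromBlocks ((X : R[X]) • 1) B' C' 0).det = X ^ k * (-(C' * B')).det := by
    apply (monic_X_pow (Fintype.card n)).isRegular.right
    dsimp only
    rw [det_fromBlocks_smul_one₁₁_mul_pow, smul_zero, zero_sub, hcard, pow_add]
    ring
  have eval_corner : (evalRingHom a).mapMatrix (fromBlocks ((X : R[X]) • 1) B' C' 0) =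
      fromBlocks (a • 1) B C 0 := by
    ext (i | i) (j | j) <;> simp [B', C', one_apply, apply_ite (eval a)]
  have eval_product : (evalRingHom a).mapMatrix (-(C' * B')) = -(C * B) := by
    ext i j
    simp [B', C', mul_apply, eval_finsetSum]
  simpa only [map_mul, map_pow, RingHom.map_det, eval_corner, eval_product, coe_evalRingHom, eval_X]
    using congrArg (evalRingHom a) generic

end BlockDeterminants

section CompleteCrown

variable {U V R : Type*} [DecidableEq V] [CommRing R]

/-- The block of `completeCrown` between the vertices and the shadows with the apex: weight `b`
between a shadow `u` and every vertex except `f u`, weight `c` between the apex and every vertex. -/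
def shadowBlock (b c : R) (f : U → V) : Matrix V (U ⊕ Unit) R :=
  fromCols (of fun v u => if v = f u then 0 else b) (of fun _ _ => c)

/-- The complete graph on the vertices `V` with weight `a`, joined through `shadowBlock b c f` to
the shadows `U` and the apex. For `a = 2d`, `b = d + 1`, `c = d` and an inclusion `f` this is the
principal submatrix of `matA` that keeps the shadows in `U` and deletes the others. -/
def completeCrown (a b c : R) (f : U → V) : Matrix (V ⊕ U ⊕ Unit) (V ⊕ U ⊕ Unit) R :=
  fromBlocks (of fun v w => if v = w then 0 else a) (shadowBlock b c f) (shadowBlock b c f)ᵀ 0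

/-- The incidence matrix of `f : U → V` with an all-ones column appended; for injective `f` its Gram
determinant counts the points of `V` outside the range of `f`. -/
def incidenceOnes (R : Type*) [CommRing R] (f : U → V) : Matrix V (U ⊕ Unit) R :=
  fromCols ((1 : Matrix V V R).submatrix id f) (of fun _ _ => 1)

/-- The change of coordinates on the shadows and the apex that turns `incidenceOnes` into
`shadowBlock`. -/
def shadowTransform (U : Type*) [DecidableEq U] (b c : R) : Matrix (U ⊕ Unit) (U ⊕ Unit) R :=
  fromBlocks ((-b) • 1) 0 (of fun _ _ => b) (c • 1)

section Factorization

variable [Fintype U]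

theorem incidenceOnes_mul_shadowTransform [DecidableEq U] (b c : R) (f : U → V) :
    incidenceOnes R f * shadowTransform U b c = shadowBlock b c f := by
  rw [incidenceOnes, shadowTransform, fromCols_mul_fromBlocks, shadowBlock]
  congr 1
  · ext v u
    by_cases h : v = f u <;> simp [mul_apply, one_apply, h]
  · ext v u
    simp

theorem neg_smul_one_add_incidenceOnes_mul (a : R) (f : U → V) :
    (-a) • 1 + incidenceOnes R f * (fromRows 0 (of fun _ _ => a) : Matrix (U ⊕ Unit) V R) =
      of fun v w => if v = w then 0 else a := by
  rw [incidenceOnes, fromCols_mul_fromRows]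
  ext v w
  by_cases h : v = w <;> simp [mul_apply, h]

theorem det_shadowTransform [DecidableEq U] (b c : R) :
    (shadowTransform U b c).det = (-b) ^ Fintype.card U * c := by
  rw [shadowTransform, det_fromBlocks_zero₁₂, det_smul, det_smul]
  simp

end Factorization

section Determinant

variable [Fintype V] {f : U → V}

theorem gram_incidenceOnes [DecidableEq U] (hf : f.Injective) :
    (incidenceOnes R f)ᵀ * incidenceOnes R f =
      fromBlocks 1 (of fun _ _ => 1) (of fun _ _ => 1) (of fun _ _ => (Fintype.card V : R)) := by
  ext (u | _) (w | _) <;>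
    simp [incidenceOnes, mul_apply, one_apply, hf.eq_iff, eq_comm]

variable [Fintype U] [DecidableEq U]

theorem det_gram_incidenceOnes (hf : f.Injective) :
    ((incidenceOnes R f)ᵀ * incidenceOnes R f).det = (Fintype.card V : R) - Fintype.card U := by
  rw [gram_incidenceOnes hf, det_fromBlocks_one₁₁]
  simp [mul_apply]

theorem det_completeCrown_eq_mul_det_fromBlocks (a b c : R) (f : U → V) :
    (completeCrown a b c f).det = ((-b) ^ Fintype.card U * c) ^ 2 *
      (fromBlocks ((-a) • 1) (incidenceOnes R f) (incidenceOnes R f)ᵀ 0).det := by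
  let B := incidenceOnes R f
  let T := shadowTransform U b c
  let X : Matrix (U ⊕ Unit) V R := fromRows 0 (of fun _ _ => a)
  have factorization : completeCrown a b c f =
      fromBlocks ((-a) • 1 + B * X) (B * T) (Tᵀ * Bᵀ) (Tᵀ * 0 * T) := by
    rw [neg_smul_one_add_incidenceOnes_mul, ← transpose_mul, incidenceOnes_mul_shadowTransform,
      Matrix.mul_zero, Matrix.zero_mul, completeCrown]
  have clear_ones : (fromBlocks ((-a) • 1 + B * X) B Bᵀ 0).det =
      (fromBlocks ((-a) • 1) B Bᵀ 0).det := by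
    simpa using det_fromBlocks_add_mul ((-a) • 1) B Bᵀ 0 X
  rw [factorization, det_fromBlocks_mul_mul, clear_ones, det_transpose, ← sq, det_shadowTransform]

theorem det_completeCrown (a b c : R) (hf : f.Injective) {k : ℕ}
    (hcard : Fintype.card V = Fintype.card U + k + 1) :
    (completeCrown a b c f).det =
      (-1) ^ Fintype.card V * (k + 1) * a ^ k * b ^ (2 * Fintype.card U) * c ^ 2 := by
  have card_cols : Fintype.card (U ⊕ Unit) = Fintype.card U + 1 := by simp
  have bordered_det : (fromBlocks ((-a) • 1) (incidenceOnes R f) (incidenceOnes R f)ᵀ 0).det =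
      (-1) ^ Fintype.card V * (k + 1) * a ^ k := by
    rw [det_fromBlocks_smul_one_zero₂₂ _ _ _ (k := k) (by omega), det_neg,
      det_gram_incidenceOnes hf, card_cols, neg_pow a, hcard]
    push_cast
    ring
  rw [det_completeCrown_eq_mul_det_fromBlocks, bordered_det, mul_pow, ← pow_mul, mul_comm _ 2,
    (even_two_mul _).neg_pow]
  ring

end Determinant

end CompleteCrown

/-- The index set of the submatrix of the theorem, split into its three kinds of indices: deleting
`i` and `j` from the middle summand of `α ⊕ β ⊕ γ` leaves the outer summands whole. -/
def sumSumSubtypeNeEquiv {α β γ : Type*} (i j : β) :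
    α ⊕ {k : β // k ≠ i ∧ k ≠ j} ⊕ γ ≃
      {x : α ⊕ β ⊕ γ // x ≠ Sum.inr (Sum.inl i) ∧ x ≠ Sum.inr (Sum.inl j)} where
  toFun
    | Sum.inl a => ⟨Sum.inl a, by simp⟩
    | Sum.inr (Sum.inl k) => ⟨Sum.inr (Sum.inl k), by simpa using k.2⟩
    | Sum.inr (Sum.inr c) => ⟨Sum.inr (Sum.inr c), by simp⟩
  invFun
    | ⟨Sum.inl a, _⟩ => Sum.inl a
    | ⟨Sum.inr (Sum.inl k), hk⟩ => Sum.inr (Sum.inl ⟨k, by simpa using hk⟩)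
    | ⟨Sum.inr (Sum.inr c), _⟩ => Sum.inr (Sum.inr c)
  left_inv := by rintro (a | k | c) <;> rfl
  right_inv := by rintro ⟨a | k | c, _⟩ <;> rfl

theorem matA_submatrix_eq_completeCrown (l d : ℕ) (i j : Fin l) :
    ((matA l d).submatrix Subtype.val Subtype.val).submatrix
        (sumSumSubtypeNeEquiv i j) (sumSumSubtypeNeEquiv i j) =
      completeCrown (2 * d : ℝ) (d + 1) d
        (Subtype.val : {k : Fin l // k ≠ i ∧ k ≠ j} → Fin l) := by
  ext (v | u | _) (w | u' | _) <;>
    simp [matA, completeCrown, shadowBlock, sumSumSubtypeNeEquiv, eq_comm]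

theorem card_subtype_ne_and_ne {α : Type*} [Fintype α] [DecidableEq α] {i j : α} (hij : i ≠ j) :
    Fintype.card {k : α // k ≠ i ∧ k ≠ j} = Fintype.card α - 2 := by
  have compl_pair : (univ.filter fun k : α => k ≠ i ∧ k ≠ j) = {i, j}ᶜ := by ext k; simp
  rw [Fintype.card_subtype, compl_pair, card_compl, card_pair hij]

/-- For `l ≥ 3`, `d ≥ 1` and `i ≠ j`, the principal minor of `A` obtained by deleting the rows
and columns indexed by `u_i` and `u_j` equals `(-1)^(l-2) · 4d³ · (d+1)^(2(l-2))`. -/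
theorem stmt17 (l d : ℕ) (hl : 3 ≤ l) (hd : 1 ≤ d) (i j : Fin l) (hij : i ≠ j) :
    ((matA l d).submatrix
        (fun x : {x : Fin l ⊕ Fin l ⊕ Unit //
            x ≠ Sum.inr (Sum.inl i) ∧ x ≠ Sum.inr (Sum.inl j)} => x.1)
        (fun x : {x : Fin l ⊕ Fin l ⊕ Unit //
            x ≠ Sum.inr (Sum.inl i) ∧ x ≠ Sum.inr (Sum.inl j)} => x.1)).det
      = (-1 : ℝ)^(l-2) * (4*(d:ℝ)^3) * ((d:ℝ)+1)^(2*(l-2)) := by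
  obtain ⟨m, rfl⟩ : ∃ m, l = m + 2 := ⟨l - 2, by omega⟩
  have card_kept : Fintype.card {k : Fin (m + 2) // k ≠ i ∧ k ≠ j} = m := by
    simpa using card_subtype_ne_and_ne hij
  rw [← det_submatrix_equiv_self (sumSumSubtypeNeEquiv i j), matA_submatrix_eq_completeCrown,
    det_completeCrown (k := 1) _ _ _ Subtype.val_injective (by simp [card_kept]),
    card_kept, Fintype.card_fin, Nat.add_sub_cancel]
  push_cast
  ring
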